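/- Let p be a prime, V a p-torsion-free valuation domain of Krull dimension 1 that is Witt-perfect and admits a compatible system of p-power roots p^{1/p^n} ∈ V, and A a p-torsion-free flat V-algebra with a nonzero divisor g ∈ A admitting a compatible system of p-power roots g^{1/p^n} ∈ A. Assume: (1) p lies in the Jacobson radical of A and A is completely integrally closed in A[1/p]; (2) A is (pg)^{1/p^∞}-almost Witt-perfect and is integral over a Noetherian subring; (3) (p,g) is a regular sequence on A. Then, inside A[1/(pg)], the integral closure of A in A[1/(pg)] coincides with the complete integral closure of A in A[1/(pg)], and both are equal to the intersection ⋂_{j>0} A^{j∘}. Moreover, if A is completely integrally closed in A[1/(pg)], then A = ⋂_{j>0} A^{j∘} and A = {x ∈ A[1/g] : g^{1/p^n}·x ∈ A for all n > 0}. -/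

import Mathlib

/-- An element `x` of an `R`-algebra `B` is almost integral over `R` if all its powers lie in a
single finitely generated `R`-submodule of `B`. -/
def IsAlmostIntegralElem (R : Type*) {B : Type*} [CommRing R] [CommRing B] [Algebra R B]
    (x : B) : Prop :=
  ∃ M : Submodule R B, M.FG ∧ ∀ n : ℕ, x ^ n ∈ M

/-- `R` is completely integrally closed in the `R`-algebra `B` if every element of `B` that is
almost integral over `R` lies in the image of `R`. -/
def IsCompletelyIntegrallyClosedIn (R B : Type*) [CommRing R] [CommRing B] [Algebra R B] : Prop :=
  ∀ x : B, IsAlmostIntegralElem R x → x ∈ (algebraMap R B).range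

/-- A `p`-torsion-free ring `A` is Witt-perfect if the Frobenius endomorphism of `A/pA` is
surjective and for every `a ∈ A` there is `b ∈ A` with `b^p ≡ p·a (mod p²A)`. -/
def IsWittPerfect (p : ℕ) (A : Type*) [CommRing A] : Prop :=
  (∀ a : A, ∃ b c : A, a - b ^ p = p * c) ∧
  (∀ a : A, ∃ b c : A, b ^ p - p * a = (p : A) ^ 2 * c)

/-- `(pg)^{1/p^∞}`-almost Witt-perfectness, where `pga n` denotes
`(pg)^{1/p^n} = p^{1/p^n}·g^{1/p^n}`. -/
def IsAlmostWittPerfect (p : ℕ) {A : Type*} [CommRing A] (pga : ℕ → A) : Prop :=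
  (∀ a : A, ∀ n : ℕ, 0 < n → ∃ b c : A, pga n * a - b ^ p = p * c) ∧
  (∀ a : A, ∀ n : ℕ, 0 < n → ∃ b c : A, b ^ p - p * (pga n * a) = (p : A) ^ 2 * c)

lemma stepC {D K A : Type*} [CommRing D] [IsDomain D] [IsLocalRing D] [Ring.KrullDimLE 1 D]
    [Field K] [Algebra D K]
    (hinj : Function.Injective (algebraMap D K)) [CommRing A] [Algebra A K]
    (hA : ∀ a : A, IsIntegral D (algebraMap A K a)) (π u γ : D)
    (hπ : π ∈ IsLocalRing.maximalIdeal D) (hu : u ∈ IsLocalRing.maximalIdeal D)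
    (hπ0 : π ≠ 0) (hu0 : u ≠ 0) (hγ0 : γ ≠ 0)
    (h : ∀ j : ℕ, 0 < j → ∃ m : ℕ, ∀ n : ℕ,
      (algebraMap D K π) ^ m * ((algebraMap D K u)⁻¹) ^ n ∈
        Algebra.adjoin A {(algebraMap D K π) ^ j * (algebraMap D K γ)⁻¹}) : False := by
  have key : ∀ a ∈ IsLocalRing.maximalIdeal D, ∀ c : D, c ≠ 0 → ∃ j : ℕ, c ∣ a ^ j := by
    intro a ha c hc
    have : a ∈ (Ideal.span {c}).radical := by
      rw [Ideal.radical_eq_sInf, Submodule.mem_sInf]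
      rintro J ⟨hJ, hJp⟩
      have hb : J ≠ ⊥ := by
        rintro rfl
        apply hc
        simpa using hJ
      have := hJp.isMaximal_of_ne_bot hb
      rwa [IsLocalRing.eq_maximalIdeal this]
    obtain ⟨j, hj⟩ := this
    exact ⟨j, Ideal.mem_span_singleton.mp hj⟩
  have hne : ∀ d : D, d ≠ 0 → algebraMap D K d ≠ 0 := fun d hd h0 =>
    hd (hinj (by rw [h0, map_zero]))
  obtain ⟨j, c, hc⟩ := key π hπ γ hγ0
  obtain ⟨m, hm⟩ := h (j + 1) (Nat.succ_pos j)
  have hgen : (algebraMap D K π) ^ (j + 1) * (algebraMap D K γ)⁻¹ = algebraMap D K (π * c) := by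
    have := hne γ hγ0
    rw [← map_pow, pow_succ, hc]
    simp only [map_mul]
    field_simp
  have hint : ∀ y ∈ Algebra.adjoin A {(algebraMap D K π) ^ (j + 1) * (algebraMap D K γ)⁻¹},
      IsIntegral D y := by
    intro y hy
    induction hy using Algebra.adjoin_induction with
    | mem x hx =>
      rw [Set.mem_singleton_iff] at hx
      rw [hx, hgen]
      exact isIntegral_algebraMap
    | algebraMap r => exact hA r
    | add x y _ _ hx hy => exact hx.add hy
    | mul x y _ _ hx hy => exact hx.mul hy
  obtain ⟨l, e, he⟩ := key u hu (π ^ m) (pow_ne_zero _ hπ0)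
  have h1 := hint _ (hm (l + 1))
  have he0 : e ≠ 0 := by
    rintro rfl
    rw [mul_zero] at he
    exact pow_ne_zero _ hu0 he
  have h2 : (algebraMap D K π) ^ m * ((algebraMap D K u)⁻¹) ^ (l + 1)
      = (algebraMap D K (u * e))⁻¹ := by
    have h3 := hne u hu0
    have h4 := hne e he0
    have h5 := hne π hπ0
    have h6 := congrArg (algebraMap D K) he
    simp only [map_mul, map_pow] at h6
    rw [pow_succ, inv_pow, h6, map_mul]
    field_simp
  rw [h2] at h1
  obtain ⟨f, hf, hf0⟩ := h1
  let _ := invertibleOfNonzero (hne _ (mul_ne_zero hu0 he0))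
  rw [← invOf_eq_inv, ← Polynomial.eval₂_reverse_eq_zero_iff, invOf_invOf,
    Polynomial.eval₂_at_apply] at hf0
  have h7 : f.reverse.eval (u * e) = 0 := hinj (by rw [hf0, map_zero])
  have h8 := Polynomial.sub_dvd_eval_sub (u * e) 0 f.reverse
  rw [h7, ← Polynomial.coeff_zero_eq_eval_zero, Polynomial.coeff_zero_reverse, hf.leadingCoeff,
    sub_zero, zero_sub, dvd_neg] at h8
  exact hu (isUnit_of_dvd_one ((Dvd.intro _ rfl).trans h8))

lemma stepB {R K A : Type*} [CommRing R] [IsNoetherianRing R] [Field K] [CommRing A]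
    [Algebra R A] [Algebra R K] [Algebra A K] [IsScalarTower R A K] [Algebra.IsIntegral R A]
    (W : ValuationSubring K) (hW : ∀ a : A, algebraMap A K a ∈ W)
    (π γ : R) (u y t : K) (hπW : algebraMap R K π ∈ W.nonunits) (huW : u ∈ W.nonunits)
    (hy : y ∈ W) (ht : (t = u ∧ algebraMap R K π = u * y) ∨
      (t = algebraMap R K π ∧ u = algebraMap R K π * y))
    (hπ0 : algebraMap R K π ≠ 0) (hu0 : u ≠ 0) (hγ0 : algebraMap R K γ ≠ 0)
    (h : ∀ j : ℕ, 0 < j → ∃ m : ℕ, ∀ n : ℕ,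
      (algebraMap R K π) ^ m * (u⁻¹) ^ n ∈
        Algebra.adjoin A {(algebraMap R K π) ^ j * (algebraMap R K γ)⁻¹}) : False := by
  classical
  let S : Subalgebra R K := Algebra.adjoin R {u, y}
  have hSN : IsNoetherianRing S := isNoetherianRing_of_fg
    (Subalgebra.fg_def.2 ⟨{u, y}, by simp, rfl⟩)
  have huS : u ∈ S := Algebra.subset_adjoin (by simp)
  have hyS : y ∈ S := Algebra.subset_adjoin (by simp)
  have hSW : ∀ s ∈ S, s ∈ W := by
    intro s hs
    induction hs using Algebra.adjoin_induction with
    | mem x hx =>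
      rcases hx with rfl | hx
      · exact W.nonunits_subset huW
      · rw [Set.mem_singleton_iff] at hx
        exact hx ▸ hy
    | algebraMap r => rw [IsScalarTower.algebraMap_apply R A K]; exact hW _
    | add x y _ _ hx hy => exact add_mem hx hy
    | mul x y _ _ hx hy => exact mul_mem hx hy
  let ι : S →+* W := S.toSubring.subtype.codRestrict W.toSubring (fun s => hSW s.1 s.2)
  let P0 : Ideal S := (IsLocalRing.maximalIdeal W).comap ι
  have hP0 : P0.IsPrime := Ideal.IsPrime.comap ι
  have mem0 : ∀ s : S, (s : K) ∈ W.nonunits → s ∈ P0 := by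
    intro s hs
    change ι s ∈ IsLocalRing.maximalIdeal W
    exact ValuationSubring.coe_mem_nonunits_iff.mp hs
  let uS : S := ⟨u, huS⟩
  let yS : S := ⟨y, hyS⟩
  let πS : S := algebraMap R S π
  obtain ⟨tS, htS, htu, htπ⟩ : ∃ tS ∈ P0, tS ∣ uS ∧ tS ∣ πS := by
    rcases ht with ⟨-, h2⟩ | ⟨-, h2⟩
    · exact ⟨uS, mem0 _ huW, dvd_rfl, yS, Subtype.ext h2⟩
    · exact ⟨πS, mem0 _ hπW, ⟨yS, Subtype.ext h2⟩, dvd_rfl⟩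
  obtain ⟨P, hP, hPle⟩ := Ideal.exists_minimalPrimes_le (I := Ideal.span {tS}) (J := P0)
    (by simpa [Ideal.span_le] using htS)
  have hPp : P.IsPrime := hP.isPrime
  have hht := Ideal.height_le_one_of_isPrincipal_of_mem_minimalPrimes _ P hP
  have htP : tS ∈ P := hP.1.2 (Ideal.mem_span_singleton_self _)
  let D := Localization.AtPrime P
  have hle : P.primeCompl ≤ nonZeroDivisors S := Ideal.primeCompl_le_nonZeroDivisors P
  have : IsDomain D := IsLocalization.isDomain_localization hle
  have : Ring.KrullDimLE 1 D := by
    rw [Ring.krullDimLE_iff, IsLocalization.AtPrime.ringKrullDim_eq_height P D]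
    exact_mod_cast hht
  have hun : ∀ s : P.primeCompl, IsUnit (S.val.toRingHom s) := by
    intro s
    rw [isUnit_iff_ne_zero]
    intro h0
    apply s.2
    have : (s : S) = 0 := Subtype.ext h0
    rw [this]; exact P.zero_mem
  let φ : D →+* K := IsLocalization.lift hun
  let _ : Algebra D K := φ.toAlgebra
  have hφ : ∀ s : S, algebraMap D K (algebraMap S D s) = s := fun s => IsLocalization.lift_eq hun s
  have hinj : Function.Injective (algebraMap D K) := by
    rw [RingHom.algebraMap_toAlgebra]
    refine (IsLocalization.lift_injective_iff hun).2 fun a b => ?_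
    rw [(IsLocalization.injective D hle).eq_iff]
    exact Subtype.ext_iff
  have hm : ∀ s ∈ P, algebraMap S D s ∈ IsLocalRing.maximalIdeal D := fun s hs =>
    (IsLocalization.AtPrime.to_map_mem_maximal_iff D P s).2 hs
  have hn0 : ∀ s : S, (s : K) ≠ 0 → algebraMap S D s ≠ 0 := by
    intro s hs h0
    apply hs
    rw [← hφ s, h0, map_zero]
  refine stepC (D := D) (K := K) (A := A) hinj ?_ (algebraMap S D πS) (algebraMap S D uS)
    (algebraMap S D (algebraMap R S γ)) (hm _ (P.mem_of_dvd htπ htP)) (hm _ (P.mem_of_dvd htu htP))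
    (hn0 _ hπ0) (hn0 _ hu0) (hn0 _ hγ0) ?_
  · intro a
    have h1 : IsIntegral R (algebraMap A K a) := (Algebra.IsIntegral.isIntegral (R := R) a).algebraMap
    obtain ⟨f, hf, hf0⟩ := h1
    refine ⟨f.map ((algebraMap S D).comp (algebraMap R S)), hf.map _, ?_⟩
    rw [Polynomial.eval₂_map]
    convert hf0 using 2
    ext r
    exact hφ _
  · simp only [hφ]
    exact h

lemma stepField {R K A : Type*} [CommRing R] [IsNoetherianRing R] [Field K] [CommRing A]
    [Algebra R A] [Algebra R K] [Algebra A K] [IsScalarTower R A K] [Algebra.IsIntegral R A]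
    (π γ : R) (hJ : algebraMap R A π ∈ (⊥ : Ideal A).jacobson)
    (hπ0 : algebraMap R K π ≠ 0) (hγ0 : algebraMap R K γ ≠ 0) (x : K)
    (h : ∀ j : ℕ, 0 < j → ∃ m : ℕ, ∀ n : ℕ,
      (algebraMap R K π) ^ m * x ^ n ∈
        Algebra.adjoin A {(algebraMap R K π) ^ j * (algebraMap R K γ)⁻¹}) : IsIntegral A x := by
  by_contra hx
  have hx0 : x ≠ 0 := by
    rintro rfl
    exact hx isIntegral_zero
  have hu0 : x⁻¹ ≠ 0 := inv_ne_zero hx0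
  have hAn : Nontrivial A := (algebraMap A K).domain_nontrivial
  have hle : Ideal.span {algebraMap R A π} ≤ (⊥ : Ideal A).jacobson := by
    simpa [Ideal.span_le] using hJ
  have hI : Ideal.span {algebraMap R A π} ≠ ⊤ := by
    intro h0
    rw [h0, top_le_iff, Ideal.jacobson_eq_top_iff] at hle
    exact bot_ne_top hle
  let _ := invertibleOfNonzero hu0
  let T := Algebra.adjoin A {x⁻¹}
  let uT : T := ⟨x⁻¹, Algebra.subset_adjoin rfl⟩
  have hne : (Ideal.span {algebraMap R A π}).map (algebraMap A T) ⊔ Ideal.span {uT} ≠ ⊤ := by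
    intro h0
    obtain ⟨f, hf, hf0⟩ := Algebra.exists_aeval_invOf_eq_zero_of_idealMap_adjoin_sup_span_eq_top
      x⁻¹ _ hI h0
    have hu : IsUnit f.leadingCoeff := by
      have := Ideal.mem_jacobson_bot.1 (hle hf) 1
      simpa using this
    apply hx
    refine ⟨.C hu.unit⁻¹.1 * f, ?_, ?_⟩
    · rw [Polynomial.Monic, Polynomial.leadingCoeff_mul']
      · simp
      · simp
    rw [← Polynomial.aeval_def, map_mul]
    rw [invOf_eq_inv, inv_inv] at hf0
    rw [hf0, mul_zero]
  obtain ⟨W, hTW, hW⟩ := Ideal.image_subset_nonunits_valuationSubring (A := T.toSubring) _ hne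
  have hAW : ∀ a : A, algebraMap A K a ∈ W := fun a => hTW (T.algebraMap_mem a)
  have hπW : algebraMap R K π ∈ W.nonunits := by
    refine hW ⟨algebraMap A T (algebraMap R A π), ?_, ?_⟩
    · exact (le_sup_left : _ ≤ (Ideal.span {algebraMap R A π}).map (algebraMap A T) ⊔ Ideal.span {uT})
        (Ideal.mem_map_of_mem _ (Ideal.mem_span_singleton_self _))
    · exact (IsScalarTower.algebraMap_apply R A K π).symm
  have huW : x⁻¹ ∈ W.nonunits := by
    refine hW ⟨uT, ?_, rfl⟩
    exact (le_sup_right : _ ≤ (Ideal.span {algebraMap R A π}).map (algebraMap A T) ⊔ Ideal.span {uT})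
        (Ideal.mem_span_singleton_self _)
  have h' : ∀ j : ℕ, 0 < j → ∃ m : ℕ, ∀ n : ℕ,
      (algebraMap R K π) ^ m * (x⁻¹⁻¹) ^ n ∈
        Algebra.adjoin A {(algebraMap R K π) ^ j * (algebraMap R K γ)⁻¹} := by
    simpa only [inv_inv] using h
  rcases W.mem_or_inv_mem (algebraMap R K π * x) with hy | hy
  · exact stepB W hAW π γ x⁻¹ _ _ hπW huW hy (Or.inl ⟨rfl, by field_simp⟩) hπ0 hu0 hγ0 h'
  · exact stepB W hAW π γ x⁻¹ _ _ hπW huW hy (Or.inr ⟨rfl, by field_simp⟩) hπ0 hu0 hγ0 h'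

lemma stepRing {R B A : Type*} [CommRing R] [IsNoetherianRing R] [CommRing B] [CommRing A]
    [Algebra R A] [Algebra A B] [Algebra.IsIntegral R A]
    (π γ : R) (hJ : algebraMap R A π ∈ (⊥ : Ideal A).jacobson)
    (hπ : IsUnit (algebraMap A B (algebraMap R A π))) (ginv : B)
    (hγ : ginv * algebraMap A B (algebraMap R A γ) = 1) (x : B)
    (h : ∀ j : ℕ, 0 < j → ∃ m : ℕ, ∀ n : ℕ,
      (algebraMap A B (algebraMap R A π)) ^ m * x ^ n ∈
        Algebra.adjoin A {(algebraMap A B (algebraMap R A π)) ^ j * ginv}) : IsIntegral A x := by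
  by_contra hx
  let M : Submonoid B :=
    { carrier := {b | ∃ f : Polynomial A, f.Monic ∧ Polynomial.aeval x f = b}
      one_mem' := ⟨1, Polynomial.monic_one, by simp⟩
      mul_mem' := by
        rintro a b ⟨f, hf, rfl⟩ ⟨g, hg, rfl⟩
        exact ⟨f * g, hf.mul hg, by simp⟩ }
  have hd : Disjoint ((⊥ : Ideal B) : Set B) M := by
    rw [Set.disjoint_left]
    rintro b hb ⟨f, hf, hfb⟩
    exact hx ⟨f, hf, by rw [← Polynomial.aeval_def, hfb]; simpa using hb⟩
  obtain ⟨q, hq, -, hqd⟩ := Ideal.exists_le_prime_disjoint _ M hd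
  let K := FractionRing (B ⧸ q)
  let _ : Algebra R K := ((algebraMap A K).comp (algebraMap R A)).toAlgebra
  have : IsScalarTower R A K := IsScalarTower.of_algebraMap_eq fun _ => rfl
  let ψ : B →ₐ[A] K := (IsScalarTower.toAlgHom A (B ⧸ q) K).comp (Ideal.Quotient.mkₐ A q)
  have hψ : ∀ b, ψ b = 0 → b ∈ q := by
    intro b hb
    have : algebraMap (B ⧸ q) K (Ideal.Quotient.mk q b) = 0 := hb
    rw [← Ideal.Quotient.eq_zero_iff_mem]
    exact (IsFractionRing.injective (B ⧸ q) K) (by rw [this, map_zero])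
  have hRK : ∀ r : R, algebraMap R K r = ψ (algebraMap A B (algebraMap R A r)) := by
    intro r
    rw [AlgHom.commutes]; rfl
  have hgi : ψ ginv * algebraMap R K γ = 1 := by
    rw [hRK, ← map_mul, hγ, map_one]
  have hγ0 : algebraMap R K γ ≠ 0 := right_ne_zero_of_mul_eq_one hgi
  have hint : IsIntegral A (ψ x) := by
    refine stepField (R := R) π γ hJ ?_ hγ0 (ψ x) ?_
    · rw [hRK]
      exact (hπ.map ψ).ne_zero
    · intro j hj
      obtain ⟨m, hm⟩ := h j hj
      refine ⟨m, fun n => ?_⟩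
      have h1 : ψ _ ∈ (Algebra.adjoin A {(algebraMap A B (algebraMap R A π)) ^ j * ginv}).map ψ :=
        ⟨_, hm n, rfl⟩
      rw [AlgHom.map_adjoin, Set.image_singleton] at h1
      simp only [map_mul ψ, map_pow ψ] at h1
      rw [hRK π, ← eq_inv_of_mul_eq_one_left hgi]
      exact h1
  obtain ⟨f, hf, hf0⟩ := hint
  rw [← Polynomial.aeval_def, Polynomial.aeval_algHom_apply] at hf0
  exact Set.disjoint_left.1 hqd (hψ _ hf0) ⟨f, hf, rfl⟩

lemma almostInt_denom {A B : Type*} [CommRing A] [CommRing B] [Algebra A B] (s : A)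
    [IsLocalization.Away s B] (x : B) (hx : IsAlmostIntegralElem A x) :
    ∃ N : ℕ, ∀ n : ℕ, ∃ a : A, algebraMap A B s ^ N * x ^ n = algebraMap A B a := by
  obtain ⟨M, ⟨F, rfl⟩, hM⟩ := hx
  obtain ⟨⟨_, N, rfl⟩, hb⟩ := IsLocalization.exist_integer_multiples_of_finset
    (Submonoid.powers s) F
  refine ⟨N, fun n => ?_⟩
  have : ∀ y ∈ Submodule.span A (F : Set B), ∃ a : A, algebraMap A B s ^ N * y = algebraMap A B a := by
    intro y hy
    induction hy using Submodule.span_induction with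
    | mem y hy =>
      obtain ⟨a, ha⟩ := hb y hy
      exact ⟨a, by rw [ha, Algebra.smul_def]; simp⟩
    | zero => exact ⟨0, by simp⟩
    | add y z _ _ hy hz =>
      obtain ⟨a, ha⟩ := hy
      obtain ⟨b, hb⟩ := hz
      exact ⟨a + b, by rw [mul_add, ha, hb, map_add]⟩
    | smul r y _ hy =>
      obtain ⟨a, ha⟩ := hy
      exact ⟨r * a, by rw [mul_smul_comm, ha, map_mul, Algebra.smul_def]⟩
  exact this _ (hM n)

/-- **Witt-perfect Riemann extension theorem, part (c).**  Under the hypotheses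
of Theorem 4.7 of Nakazato–Shimomoto, inside `A[1/(pg)]`, the integral closure of `A` equals
the complete integral closure of `A`, and both coincide with `⋂_{j>0} A^{j∘}`.  If moreover
`A` is completely integrally closed in `A[1/(pg)]`, then `A = ⋂_{j>0} A^{j∘}` and
`A = {x ∈ A[1/g] : g^{1/p^n}·x ∈ A for all n > 0}`. -/
theorem wittPerfectRiemannExtension_integralClosure.{u}
    (p : ℕ) (hp : p.Prime)
    (V : Type u) [CommRing V] [IsDomain V] [ValuationRing V]
    (hVdim : ringKrullDim V = 1)
    (hVtf : (p : V) ∈ nonZeroDivisors V)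
    (hVW : IsWittPerfect p V)
    (prV : ℕ → V) (hprV0 : prV 0 = (p : V)) (hprV : ∀ n, prV (n + 1) ^ p = prV n)
    (A : Type u) [CommRing A] [Algebra V A] [Module.Flat V A]
    (hAtf : (p : A) ∈ nonZeroDivisors A)
    (g : A) (hg : g ∈ nonZeroDivisors A)
    (gr : ℕ → A) (hgr0 : gr 0 = g) (hgr : ∀ n, gr (n + 1) ^ p = gr n)
    -- (1) A is p-adically Zariskian and completely integrally closed in A[1/p]
    (hZar : (p : A) ∈ (⊥ : Ideal A).jacobson)
    (Ap : Type u) [CommRing Ap] [Algebra A Ap] [IsLocalization.Away (p : A) Ap]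
    (hcic : IsCompletelyIntegrallyClosedIn A Ap)
    -- (2) A is (pg)^{1/p^∞}-almost Witt-perfect and integral over a Noetherian subring
    (hAWP : IsAlmostWittPerfect p (fun n => algebraMap V A (prV n) * gr n))
    (hNoeth : ∃ R : Subring A, IsNoetherianRing ↥R ∧ ∀ x : A, IsIntegral ↥R x)
    -- (3) (p, g) is a regular sequence on A
    (hreg : ∀ x : A, g * x ∈ Ideal.span {(p : A)} → x ∈ Ideal.span {(p : A)})
    -- the localization A[1/(pg)] and the inverse of g in it
    (Apg : Type u) [CommRing Apg] [Algebra A Apg] [IsLocalization.Away ((p : A) * g) Apg]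
    (ginv : Apg) (hginv : ginv * algebraMap A Apg g = 1) :
    -- the integral closure of A in A[1/(pg)] equals the complete integral closure of A there
    (integralClosure A Apg : Set Apg) = {x : Apg | IsAlmostIntegralElem A x} ∧
    -- and both are equal to ⋂_{j>0} A^{j∘}
    ({x : Apg | IsAlmostIntegralElem A x}
      = ⋂ j : ℕ, ⋂ (_ : 0 < j),
          {x : Apg | ∃ m : ℕ, ∀ n : ℕ,
            (algebraMap A Apg (p : A)) ^ m * x ^ n ∈
              Algebra.adjoin A {(algebraMap A Apg (p : A)) ^ j * ginv}}) ∧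
    -- moreover, if A is completely integrally closed in A[1/(pg)], then
    (IsCompletelyIntegrallyClosedIn A Apg →
      -- A = ⋂_{j>0} A^{j∘}
      (Set.range (algebraMap A Apg)
        = ⋂ j : ℕ, ⋂ (_ : 0 < j),
            {x : Apg | ∃ m : ℕ, ∀ n : ℕ,
              (algebraMap A Apg (p : A)) ^ m * x ^ n ∈
                Algebra.adjoin A {(algebraMap A Apg (p : A)) ^ j * ginv}}) ∧
      -- A = g^{-1/p^∞}A = {x ∈ A[1/g] : g^{1/p^n}·x ∈ A for all n > 0}
      Set.range (algebraMap A Apg)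
        = {x : Apg | (∃ (a : A) (m : ℕ), (algebraMap A Apg g) ^ m * x = algebraMap A Apg a) ∧
            ∀ n : ℕ, 0 < n → algebraMap A Apg (gr n) * x ∈ Set.range (algebraMap A Apg)}) := by
  classical
  have hpu : IsUnit (algebraMap A Apg (p : A)) := by
    have := IsLocalization.Away.algebraMap_isUnit (S := Apg) ((p : A) * g)
    rw [map_mul] at this
    exact isUnit_of_mul_isUnit_left this
  have h12 : ∀ x : Apg, IsIntegral A x → IsAlmostIntegralElem A x := fun x hx =>
    ⟨Subalgebra.toSubmodule (Algebra.adjoin A {x}), hx.fg_adjoin_singleton, fun n =>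
      pow_mem (Algebra.self_mem_adjoin_singleton A x) n⟩
  have h23 : ∀ x : Apg, IsAlmostIntegralElem A x → ∀ j : ℕ, 0 < j → ∃ m : ℕ, ∀ n : ℕ,
            (algebraMap A Apg (p : A)) ^ m * x ^ n ∈
              Algebra.adjoin A {(algebraMap A Apg (p : A)) ^ j * ginv} := by
    intro x hx j _
    obtain ⟨N, hN⟩ := almostInt_denom ((p : A) * g) x hx
    refine ⟨N + j * N, fun n => ?_⟩
    obtain ⟨a, ha⟩ := hN n
    have h1 : (algebraMap A Apg (p : A)) ^ (N + j * N) * x ^ n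
        = ((algebraMap A Apg (p : A)) ^ j * ginv) ^ N * algebraMap A Apg a := by
      have h2 : ginv ^ N * (algebraMap A Apg g) ^ N = 1 := by rw [← mul_pow, hginv, one_pow]
      rw [← ha, map_mul, mul_pow, mul_pow, pow_add, pow_mul]
      linear_combination (-(algebraMap A Apg (p : A)) ^ N * ((algebraMap A Apg (p : A)) ^ j) ^ N
        * x ^ n) * h2
    rw [h1]
    exact mul_mem (pow_mem (Algebra.self_mem_adjoin_singleton A _) N) (Subalgebra.algebraMap_mem _ a)
  have h31 : ∀ x : Apg, (∀ j : ℕ, 0 < j → ∃ m : ℕ, ∀ n : ℕ,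
            (algebraMap A Apg (p : A)) ^ m * x ^ n ∈
              Algebra.adjoin A {(algebraMap A Apg (p : A)) ^ j * ginv}) → IsIntegral A x := by
    intro x hx
    obtain ⟨R, hRN, hRi⟩ := hNoeth
    let S : Subalgebra R A := Algebra.adjoin R {g}
    have hSN : IsNoetherianRing S := isNoetherianRing_of_fg
      (Subalgebra.fg_def.2 ⟨{g}, by simp, rfl⟩)
    have hSi : Algebra.IsIntegral S A := ⟨fun a => (hRi a).tower_top⟩
    let gS : S := ⟨g, Algebra.self_mem_adjoin_singleton _ g⟩
    have hpS : algebraMap S A (p : S) = (p : A) := map_natCast _ _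
    exact stepRing (R := S) (p : S) gS (by rw [hpS]; exact hZar) (by rw [hpS]; exact hpu) ginv hginv x
      (by rw [hpS]; exact hx)
  have e2 : {x : Apg | IsAlmostIntegralElem A x}
      = ⋂ j : ℕ, ⋂ (_ : 0 < j),
          {x : Apg | ∃ m : ℕ, ∀ n : ℕ,
            (algebraMap A Apg (p : A)) ^ m * x ^ n ∈
              Algebra.adjoin A {(algebraMap A Apg (p : A)) ^ j * ginv}} := by
    ext x
    simp only [Set.mem_iInter, Set.mem_ofPred_eq]
    exact ⟨h23 x, fun h => h12 x (h31 x h)⟩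
  refine ⟨?_, e2, fun hc => ⟨?_, ?_⟩⟩
  · ext x
    exact ⟨fun h => h12 x h, fun h => h31 x (h23 x h)⟩
  · rw [← e2]
    ext x
    refine ⟨?_, fun h => hc x h⟩
    rintro ⟨a, rfl⟩
    exact h12 _ isIntegral_algebraMap
  · ext x
    constructor
    · rintro ⟨a, rfl⟩
      exact ⟨⟨a, 0, by simp⟩, fun n _ => ⟨gr n * a, map_mul _ _ _⟩⟩
    · rintro ⟨-, hx⟩
      apply hc x
      have hgp : ∀ n, gr n ^ p ^ n = g := by
        intro n
        induction n with
        | zero => simpa using hgr0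
        | succ n ih => rw [pow_succ', pow_mul, hgr, ih]
      refine ⟨Submodule.span A {ginv}, Submodule.fg_span_singleton _, fun k => ?_⟩
      obtain ⟨a, ha⟩ := hx (k + 1) (Nat.succ_pos k)
      have hk : k ≤ p ^ (k + 1) := (Nat.lt_pow_self hp.one_lt).le.trans
        (Nat.pow_le_pow_right hp.pos (Nat.le_succ k))
      rw [Submodule.mem_span_singleton]
      refine ⟨gr (k + 1) ^ (p ^ (k + 1) - k) * a ^ k, ?_⟩
      have h1 : algebraMap A Apg g * x ^ k
          = algebraMap A Apg (gr (k + 1) ^ (p ^ (k + 1) - k) * a ^ k) := by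
        rw [map_mul, map_pow, map_pow, ha, mul_pow, ← mul_assoc, ← pow_add, Nat.sub_add_cancel hk,
          ← map_pow, hgp]
      rw [Algebra.smul_def, ← h1]
      linear_combination x ^ k * hginv
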